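/- Let n ≥ 2 be an integer, let γ ⊆ {1,…,n} have cardinality k with 1 ≤ k ≤ n−1, and let 0 < σ²_min < σ²_max. Define R = {c ∈ ℝⁿ : σ²_min ≤ S_γ(c)/k ≤ σ²_max and σ²_min ≤ (S(c) − S_γ(c))/(n−k) ≤ σ²_max} and R′ = R ∩ {c ∈ ℝⁿ : S_γ(c)/k ≥ (S(c) − S_γ(c))/(n−k)}. Then ∫_{R′} S_γ(c)^{−k/2} (S(c) − S_γ(c))^{−(n−k)/2} dc = (1/2) · ∫_R S_γ(c)^{−k/2} (S(c) − S_γ(c))^{−(n−k)/2} dc; that is, imposing the constraint that the informative variance estimate is at least the noise variance estimate changes the normalized-maximum-likelihood code length by exactly one bit (ln 2 nats). -/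

import Mathlib

open MeasureTheory Real Finset

/-- `Sg γ c = ∑_{i ∈ γ} c_i²`. -/
noncomputable def Sg {n : ℕ} (γ : Finset (Fin n)) (c : Fin n → ℝ) : ℝ :=
  ∑ i ∈ γ, (c i) ^ 2

/-- `Stot c = ∑_{i=1}^n c_i²`. -/
noncomputable def Stot {n : ℕ} (c : Fin n → ℝ) : ℝ :=
  ∑ i, (c i) ^ 2

/-! In polar coordinates on a `d`-dimensional space the measure `‖x‖⁻ᵈ dx` becomes `dr / r` times
the surface measure of the sphere. The measure `du / u` on the half-line is invariant under
`u ↦ c * u` and is halved by `u ↦ u ^ 2`, so the variance estimate `u = ‖x‖ ^ 2 / d` is again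
distributed according to a multiple of `du / u`, whatever the dimension. Splitting the coordinates
along `γ`, the integrand of the theorem is the product of two such densities, hence the pair of
variance estimates has law a multiple of `du / u ⊗ dv / v`. This law is symmetric and does not
charge the diagonal, so `v ≤ u` cuts every symmetric region of variances into two halves. -/

open scoped ENNReal

theorem ae_prod_fst_ne_snd {α : Type*} [MeasurableSpace α] [MeasurableEq α] {μ ν : Measure α}
    [SFinite ν] [NullSingletonClass ν] : ∀ᵐ p ∂μ.prod ν, p.1 ≠ p.2 :=
  (Measure.ae_prod_iff_ae_ae measurableSet_diagonal.compl).2 <|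
    .of_forall fun x => by simp [ae_iff]

theorem two_mul_prod_self_inter_snd_le_fst {α : Type*} [LinearOrder α] [TopologicalSpace α]
    [OrderClosedTopology α] [SecondCountableTopology α] [MeasurableSpace α]
    [OpensMeasurableSpace α] {μ : Measure α} [SFinite μ] [NullSingletonClass μ] {D : Set (α × α)}
    (hD : MeasurableSet D) (hswap : Prod.swap ⁻¹' D = D) :
    2 * μ.prod μ (D ∩ {p | p.2 ≤ p.1}) = μ.prod μ D := by
  have h_le : MeasurableSet {p : α × α | p.2 ≤ p.1} :=
    measurableSet_le measurable_snd measurable_fst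
  have h_reflect : μ.prod μ (D \ {p | p.2 ≤ p.1}) = μ.prod μ (D ∩ {p | p.2 ≤ p.1}) :=
    calc μ.prod μ (D \ {p | p.2 ≤ p.1})
      _ = μ.prod μ (D ∩ {p | p.1 ≤ p.2}) := by
        refine measure_congr ?_
        filter_upwards [ae_prod_fst_ne_snd] with p hp
        exact propext (and_congr_right fun _ => not_le.trans hp.le_iff_lt.symm)
      _ = μ.prod μ (Prod.swap ⁻¹' (D ∩ {p | p.2 ≤ p.1})) := by
        rw [Set.preimage_inter, hswap]; rfl
      _ = μ.prod μ (D ∩ {p | p.2 ≤ p.1}) :=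
        Measure.measurePreserving_swap.measure_preimage (hD.inter h_le).nullMeasurableSet
  rw [two_mul, ← measure_inter_add_sdiff D h_le, h_reflect]

/-- The measure `du / u` on `(0, ∞)`. It is encoded as the image of Lebesgue measure under `exp`, so
that it inherits its invariance from translations and dilations of the line. -/
noncomputable def logMeasure : Measure ℝ := volume.map exp

namespace logMeasure

instance : NullSingletonClass logMeasure where
  measure_singleton u := by
    rw [logMeasure, Measure.map_apply measurable_exp (measurableSet_singleton u)]
    exact (Set.subsingleton_singleton.preimage exp_injective).measure_zero volume

instance : SFinite logMeasure := inferInstanceAs (SFinite (volume.map exp))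

theorem lintegral_eq_setLIntegral_Ioi {f : ℝ → ℝ≥0∞} (hf : Measurable f) :
    ∫⁻ u, f u ∂logMeasure = ∫⁻ u in Set.Ioi 0, ENNReal.ofReal u⁻¹ * f u := by
  have hchange := lintegral_image_eq_lintegral_abs_deriv_mul .univ
    (fun t _ => (hasDerivAt_exp t).hasDerivWithinAt) exp_injective.injOn
    (fun u => ENNReal.ofReal u⁻¹ * f u)
  rw [Set.image_univ, range_exp, Measure.restrict_univ] at hchange
  rw [hchange, logMeasure, lintegral_map hf measurable_exp]
  refine lintegral_congr fun t => ?_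
  rw [← mul_assoc, ← ENNReal.ofReal_mul (abs_nonneg _), abs_exp, mul_inv_cancel₀ (exp_ne_zero t),
    ENNReal.ofReal_one, one_mul]

theorem map_mul_left {c : ℝ} (hc : 0 < c) : logMeasure.map (c * ·) = logMeasure := by
  have hexp : (c * ·) ∘ exp = exp ∘ (log c + ·) := by
    funext t; simp [exp_add, exp_log hc]
  rw [logMeasure, Measure.map_map (by fun_prop) (by fun_prop), hexp,
    ← Measure.map_map (by fun_prop) (by fun_prop), map_add_left_eq_self]

theorem map_pow {n : ℕ} (hn : n ≠ 0) :
    logMeasure.map (· ^ n) = (n : ℝ≥0∞)⁻¹ • logMeasure := by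
  have hexp : (· ^ n) ∘ exp = exp ∘ ((n : ℝ) * ·) := by
    funext t; simp [exp_nat_mul]
  rw [logMeasure, Measure.map_map (by fun_prop) (by fun_prop), hexp,
    ← Measure.map_map (by fun_prop) (by fun_prop), map_volume_mul_left (Nat.cast_ne_zero.2 hn),
    Measure.map_smul, abs_of_nonneg (by positivity),
    ENNReal.ofReal_inv_of_pos (by positivity), ENNReal.ofReal_natCast]

end logMeasure

section Polar

variable {E : Type*} [NormedAddCommGroup E] [NormedSpace ℝ E] [MeasurableSpace E]

/-- The mean of the squared coordinates of `x`, that is, the maximum likelihood estimate of the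
variance from a centred Gaussian sample `x`. -/
noncomputable def meanSquare (x : E) : ℝ := ‖x‖ ^ 2 / Module.finrank ℝ E

@[fun_prop]
theorem measurable_meanSquare [BorelSpace E] : Measurable (meanSquare : E → ℝ) := by
  unfold meanSquare; fun_prop

/-- The measure `dμ(x) / ‖x‖ᵈ` on a `d`-dimensional space, invariant under dilations. -/
noncomputable def dilationInvariantMeasure (μ : Measure E) : Measure E :=
  μ.withDensity fun x => ENNReal.ofReal (‖x‖ ^ Module.finrank ℝ E)⁻¹

instance (μ : Measure E) [SFinite μ] : SFinite (dilationInvariantMeasure μ) :=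
  inferInstanceAs (SFinite (μ.withDensity _))

variable [BorelSpace E] [FiniteDimensional ℝ E] [Nontrivial E]
  (μ : Measure E) [μ.IsAddHaarMeasure]

theorem lintegral_fun_norm_addHaar {f : ℝ → ℝ≥0∞} (hf : Measurable f) :
    ∫⁻ x, f ‖x‖ ∂μ = μ.toSphere Set.univ *
      ∫⁻ r in Set.Ioi (0 : ℝ), ENNReal.ofReal (r ^ (Module.finrank ℝ E - 1)) * f r :=
  calc ∫⁻ x, f ‖x‖ ∂μ
    _ = ∫⁻ x : ({0}ᶜ : Set E), f ‖x.1‖ ∂μ.comap (↑) := by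
      rw [lintegral_subtype_comap (measurableSet_singleton _).compl fun x => f ‖x‖,
        restrict_compl_singleton]
    _ = ∫⁻ p, f p.2 ∂μ.toSphere.prod (.volumeIoiPow (Module.finrank ℝ E - 1)) := by
      simpa using μ.measurePreserving_homeomorphUnitSphereProd.lintegral_comp_emb
        (Homeomorph.measurableEmbedding _) (f ∘ Subtype.val ∘ Prod.snd)
    _ = μ.toSphere Set.univ *
        ∫⁻ r : Set.Ioi (0 : ℝ), f r ∂.volumeIoiPow (Module.finrank ℝ E - 1) := by
      rw [lintegral_prod _ (by fun_prop)]
      simp only [lintegral_const, mul_comm]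
    _ = _ := by
      rw [Measure.volumeIoiPow, lintegral_withDensity_eq_lintegral_mul _ (by fun_prop)
        (by fun_prop)]
      exact congrArg _ (lintegral_subtype_comap measurableSet_Ioi
        fun r => ENNReal.ofReal (r ^ (Module.finrank ℝ E - 1)) * f r)

theorem map_norm_dilationInvariantMeasure :
    (dilationInvariantMeasure μ).map norm = μ.toSphere Set.univ • logMeasure := by
  ext s hs
  have hind : Measurable (s.indicator (1 : ℝ → ℝ≥0∞)) := measurable_one.indicator hs
  have hdensity : ∀ r ∈ Set.Ioi (0 : ℝ),
      ENNReal.ofReal (r ^ (Module.finrank ℝ E - 1)) *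
        (ENNReal.ofReal (r ^ Module.finrank ℝ E)⁻¹ * s.indicator 1 r) =
      ENNReal.ofReal r⁻¹ * s.indicator 1 r := by
    intro r (hr : 0 < r)
    rw [← mul_assoc, ← ENNReal.ofReal_mul (by positivity),
      ← pow_sub_one_mul (Module.finrank_pos (R := ℝ) (M := E)).ne' r]
    congr 2
    field_simp
  rw [← lintegral_indicator_one hs, lintegral_map hind measurable_norm, dilationInvariantMeasure,
    lintegral_withDensity_eq_lintegral_mul _ (by fun_prop) (by fun_prop)]
  refine (lintegral_fun_norm_addHaar μ
    (f := fun r => ENNReal.ofReal (r ^ Module.finrank ℝ E)⁻¹ * s.indicator 1 r)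
    (by fun_prop)).trans ?_
  rw [setLIntegral_congr_fun measurableSet_Ioi hdensity,
    ← logMeasure.lintegral_eq_setLIntegral_Ioi hind, lintegral_indicator_one hs,
    Measure.smul_apply, smul_eq_mul]

theorem map_meanSquare_dilationInvariantMeasure :
    (dilationInvariantMeasure μ).map meanSquare = (μ.toSphere Set.univ * 2⁻¹) • logMeasure := by
  have hcomp : (meanSquare : E → ℝ) = ((Module.finrank ℝ E : ℝ)⁻¹ * ·) ∘ (· ^ 2) ∘ norm := by
    funext x; simp [meanSquare, div_eq_inv_mul]
  have hdim : 0 < (Module.finrank ℝ E : ℝ)⁻¹ := by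
    have := Module.finrank_pos (R := ℝ) (M := E)
    positivity
  rw [hcomp, ← Measure.map_map (by fun_prop) (by fun_prop),
    ← Measure.map_map (by fun_prop) (by fun_prop), map_norm_dilationInvariantMeasure,
    Measure.map_smul, Measure.map_smul, logMeasure.map_pow two_ne_zero, Measure.map_smul,
    logMeasure.map_mul_left hdim, smul_smul, Nat.cast_ofNat]

end Polar

section Product

variable {E F : Type*}
  [NormedAddCommGroup E] [NormedSpace ℝ E] [FiniteDimensional ℝ E] [Nontrivial E]
  [MeasurableSpace E] [BorelSpace E] (μ : Measure E) [μ.IsAddHaarMeasure]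
  [NormedAddCommGroup F] [NormedSpace ℝ F] [FiniteDimensional ℝ F] [Nontrivial F]
  [MeasurableSpace F] [BorelSpace F] (ν : Measure F) [ν.IsAddHaarMeasure]

theorem two_mul_dilationInvariantMeasure_prod_inter_snd_le_fst {D : Set (ℝ × ℝ)}
    (hD : MeasurableSet D) (hswap : Prod.swap ⁻¹' D = D) :
    2 * (dilationInvariantMeasure μ).prod (dilationInvariantMeasure ν)
        (Prod.map meanSquare meanSquare ⁻¹' (D ∩ {p | p.2 ≤ p.1})) =
      (dilationInvariantMeasure μ).prod (dilationInvariantMeasure ν)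
        (Prod.map meanSquare meanSquare ⁻¹' D) := by
  have hmeas : Measurable (Prod.map meanSquare meanSquare : E × F → ℝ × ℝ) :=
    measurable_meanSquare.prodMap measurable_meanSquare
  have h_le : MeasurableSet {p : ℝ × ℝ | p.2 ≤ p.1} :=
    measurableSet_le measurable_snd measurable_fst
  rw [← Measure.map_apply hmeas hD, ← Measure.map_apply hmeas (hD.inter h_le),
    ← Measure.map_prod_map _ _ measurable_meanSquare measurable_meanSquare,
    map_meanSquare_dilationInvariantMeasure, map_meanSquare_dilationInvariantMeasure,
    Measure.prod_smul_left, Measure.prod_smul_right]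
  simp only [Measure.smul_apply, smul_eq_mul]
  rw [← two_mul_prod_self_inter_snd_le_fst hD hswap]
  ring

end Product

section CoordSplit

variable {ι : Type*} (γ : Finset ι)

theorem finrank_euclideanSpace_mem :
    Module.finrank ℝ (EuclideanSpace ℝ {i // i ∈ γ}) = γ.card := by
  simp

variable [DecidableEq ι]

/-- The splitting of a vector into its coordinates inside and outside `γ`, each part carrying the
Euclidean norm. -/
noncomputable def coordSplit :
    (ι → ℝ) ≃ᵐ EuclideanSpace ℝ {i // i ∈ γ} × EuclideanSpace ℝ {i // i ∉ γ} :=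
  (MeasurableEquiv.piEquivPiSubtypeProd (fun _ => ℝ) (· ∈ γ)).trans
    ((MeasurableEquiv.toLp 2 _).prodCongr (MeasurableEquiv.toLp 2 _))

theorem norm_sq_coordSplit_fst (c : ι → ℝ) : ‖(coordSplit γ c).1‖ ^ 2 = ∑ i ∈ γ, c i ^ 2 := by
  rw [EuclideanSpace.real_norm_sq_eq, ← sum_coe_sort γ (c · ^ 2)]
  rfl

variable [Fintype ι]

theorem measurePreserving_coordSplit : MeasurePreserving (coordSplit γ) := by
  have h_toLp := (PiLp.volume_preserving_toLp {i // i ∈ γ}).prod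
    (PiLp.volume_preserving_toLp {i // i ∉ γ})
  have h_split := volume_preserving_piEquivPiSubtypeProd (fun _ : ι => ℝ) (· ∈ γ)
  rw [Subsingleton.elim (Subtype.fintype (· ∈ γ)) (Finset.Subtype.fintype γ)] at h_split
  exact h_toLp.comp h_split

theorem norm_sq_coordSplit_snd (c : ι → ℝ) : ‖(coordSplit γ c).2‖ ^ 2 = ∑ i ∈ γᶜ, c i ^ 2 := by
  rw [EuclideanSpace.real_norm_sq_eq, sum_subtype (p := (· ∉ γ)) _ (by simp)]
  rfl

theorem finrank_euclideanSpace_notMem :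
    Module.finrank ℝ (EuclideanSpace ℝ {i // i ∉ γ}) = γᶜ.card := by
  simp [Fintype.card_subtype_compl, card_compl]

end CoordSplit

theorem sq_rpow_neg_half {r : ℝ} (hr : 0 ≤ r) (d : ℕ) : (r ^ 2) ^ (-(d : ℝ) / 2) = (r ^ d)⁻¹ := by
  rw [← rpow_natCast_mul hr, ← rpow_natCast r d, ← rpow_neg hr]
  congr 1
  push_cast
  ring

section VarianceEstimates

variable {n : ℕ} (γ : Finset (Fin n)) (c : Fin n → ℝ)

/-- The pair `(σ̂_I², σ̂_N²)` of maximum likelihood variance estimates. -/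
noncomputable def varianceEstimates : ℝ × ℝ :=
  (Sg γ c / γ.card, (Stot c - Sg γ c) / ((n : ℝ) - γ.card))

/-- The integrand of the normalized maximum likelihood normalizer. -/
noncomputable def nmlWeight : ℝ :=
  Sg γ c ^ (-(γ.card : ℝ) / 2) * (Stot c - Sg γ c) ^ (-((n : ℝ) - γ.card) / 2)

theorem Sg_eq_norm_sq : Sg γ c = ‖(coordSplit γ c).1‖ ^ 2 :=
  (norm_sq_coordSplit_fst γ c).symm

theorem Stot_sub_Sg_eq_norm_sq : Stot c - Sg γ c = ‖(coordSplit γ c).2‖ ^ 2 := by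
  rw [norm_sq_coordSplit_snd, Stot, Sg, ← sum_add_sum_compl γ, add_sub_cancel_left]

theorem natCast_sub_card : (n : ℝ) - γ.card = γᶜ.card := by
  rw [card_compl, Fintype.card_fin, Nat.cast_sub (card_finset_fin_le γ)]

theorem varianceEstimates_eq_meanSquare :
    varianceEstimates γ c = Prod.map meanSquare meanSquare (coordSplit γ c) := by
  rw [varianceEstimates, Stot_sub_Sg_eq_norm_sq, Sg_eq_norm_sq, natCast_sub_card,
    ← finrank_euclideanSpace_mem, ← finrank_euclideanSpace_notMem]
  rfl

theorem nmlWeight_eq_inv_norm_pow :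
    nmlWeight γ c = (‖(coordSplit γ c).1‖ ^ γ.card)⁻¹ * (‖(coordSplit γ c).2‖ ^ γᶜ.card)⁻¹ := by
  rw [nmlWeight, Stot_sub_Sg_eq_norm_sq, Sg_eq_norm_sq, natCast_sub_card,
    sq_rpow_neg_half (norm_nonneg _), sq_rpow_neg_half (norm_nonneg _)]

theorem nmlWeight_nonneg : 0 ≤ nmlWeight γ c := by
  rw [nmlWeight_eq_inv_norm_pow]
  positivity

theorem measurable_nmlWeight : Measurable (nmlWeight γ) := by
  unfold nmlWeight Stot Sg
  fun_prop

theorem setIntegral_nmlWeight (A : Set (Fin n → ℝ)) :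
    ∫ c in A, nmlWeight γ c = (∫⁻ c in A, ENNReal.ofReal (nmlWeight γ c)).toReal :=
  integral_eq_lintegral_of_nonneg_ae (.of_forall (nmlWeight_nonneg γ))
    (measurable_nmlWeight γ).aestronglyMeasurable

theorem setLIntegral_nmlWeight_preimage {D : Set (ℝ × ℝ)} (hD : MeasurableSet D) :
    ∫⁻ c in varianceEstimates γ ⁻¹' D, ENNReal.ofReal (nmlWeight γ c) =
      (dilationInvariantMeasure (volume : Measure (EuclideanSpace ℝ {i // i ∈ γ}))).prod
        (dilationInvariantMeasure (volume : Measure (EuclideanSpace ℝ {i // i ∉ γ})))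
        (Prod.map meanSquare meanSquare ⁻¹' D) := by
  have hestimates : varianceEstimates γ = Prod.map meanSquare meanSquare ∘ coordSplit γ :=
    funext (varianceEstimates_eq_meanSquare γ)
  have hD' : MeasurableSet (Prod.map meanSquare meanSquare ⁻¹' D :
      Set (EuclideanSpace ℝ {i // i ∈ γ} × EuclideanSpace ℝ {i // i ∉ γ})) :=
    measurable_meanSquare.prodMap measurable_meanSquare hD
  rw [dilationInvariantMeasure, dilationInvariantMeasure,
    prod_withDensity (by fun_prop) (by fun_prop), withDensity_apply _ hD',
    ← Measure.volume_eq_prod, hestimates, Set.preimage_comp,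
    ← (measurePreserving_coordSplit γ).setLIntegral_comp_preimage hD' (by fun_prop),
    finrank_euclideanSpace_mem, finrank_euclideanSpace_notMem]
  refine lintegral_congr fun c => ?_
  rw [nmlWeight_eq_inv_norm_pow, ENNReal.ofReal_mul (by positivity)]

theorem stmt_1_general (hγ : γ.Nonempty) (hγc : γᶜ.Nonempty) {D : Set (ℝ × ℝ)}
    (hD : MeasurableSet D) (hswap : Prod.swap ⁻¹' D = D) :
    2 * ∫⁻ c in varianceEstimates γ ⁻¹' (D ∩ {p | p.2 ≤ p.1}), ENNReal.ofReal (nmlWeight γ c) =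
      ∫⁻ c in varianceEstimates γ ⁻¹' D, ENNReal.ofReal (nmlWeight γ c) := by
  have : Nontrivial (EuclideanSpace ℝ {i // i ∈ γ}) :=
    Module.nontrivial_of_finrank_pos (R := ℝ) <| by
      rwa [finrank_euclideanSpace_mem, card_pos]
  have : Nontrivial (EuclideanSpace ℝ {i // i ∉ γ}) :=
    Module.nontrivial_of_finrank_pos (R := ℝ) <| by
      rwa [finrank_euclideanSpace_notMem, card_pos]
  rw [setLIntegral_nmlWeight_preimage γ hD, setLIntegral_nmlWeight_preimage γ
    (hD.inter (measurableSet_le measurable_snd measurable_fst))]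
  exact two_mul_dilationInvariantMeasure_prod_inter_snd_le_fst volume volume hD hswap

end VarianceEstimates

theorem stmt_1 (n k : ℕ) (hn : 2 ≤ n) (γ : Finset (Fin n)) (hγ : γ.card = k)
    (hk1 : 1 ≤ k) (hk2 : k ≤ n - 1) (σmin σmax : ℝ) (h0 : 0 < σmin) (hσ : σmin < σmax)
    (R : Set (Fin n → ℝ))
    (hR : R = {c : Fin n → ℝ |
        σmin ≤ Sg γ c / k ∧ Sg γ c / k ≤ σmax ∧
        σmin ≤ (Stot c - Sg γ c) / ((n : ℝ) - k) ∧
        (Stot c - Sg γ c) / ((n : ℝ) - k) ≤ σmax})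
    (R' : Set (Fin n → ℝ))
    (hR' : R' = R ∩ {c : Fin n → ℝ | (Stot c - Sg γ c) / ((n : ℝ) - k) ≤ Sg γ c / k}) :
    ∫ c in R', (Sg γ c) ^ (-(k : ℝ) / 2) * (Stot c - Sg γ c) ^ (-((n : ℝ) - k) / 2)
    = (1 / 2) *
      ∫ c in R, (Sg γ c) ^ (-(k : ℝ) / 2) * (Stot c - Sg γ c) ^ (-((n : ℝ) - k) / 2) := by
  subst hγ
  have hcompl : γᶜ.Nonempty := card_pos.1 (by rw [card_compl, Fintype.card_fin]; omega)
  have hhalf := stmt_1_general γ (card_pos.1 hk1) hcompl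
    (D := Set.Icc σmin σmax ×ˢ Set.Icc σmin σmax)
    (measurableSet_Icc.prod measurableSet_Icc) (Set.preimage_swap_prod _ _)
  have hR_eq : R = varianceEstimates γ ⁻¹' (Set.Icc σmin σmax ×ˢ Set.Icc σmin σmax) :=
    hR.trans (Set.ext fun _ => and_assoc.symm)
  change ∫ c in R', nmlWeight γ c = 1 / 2 * ∫ c in R, nmlWeight γ c
  rw [setIntegral_nmlWeight, setIntegral_nmlWeight, hR', hR_eq, ← hhalf, ENNReal.toReal_mul,
    ENNReal.toReal_ofNat, one_div, inv_mul_cancel_left₀ two_ne_zero]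
  rfl
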